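/- For every AD-family 𝒜 of subsets of ℕ, the character of the filter S_𝒜 equals the cardinality of 𝒜: χ(S_𝒜) = |𝒜|. -/

import Mathlib

open Set

/-- `f[G] = {A : f⁻¹(A) ∈ G}`, the image (Rudin–Keisler) filter of a family of sets. -/
def mapFilter {α β : Type*} (f : α → β) (G : Set (Set α)) : Set (Set β) := {A | f ⁻¹' A ∈ G}

/-- `F` is a (proper) filter of subsets. -/
def IsFilterFam {α : Type*} (F : Set (Set α)) : Prop :=
  Set.univ ∈ F ∧ (∀ A ∈ F, ∀ B : Set α, A ⊆ B → B ∈ F) ∧ (∀ A ∈ F, ∀ B ∈ F, A ∩ B ∈ F)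

/-- A free filter: a proper filter containing all cofinite sets. -/
def IsFreeFilter {α : Type*} (F : Set (Set α)) : Prop :=
  IsFilterFam F ∧ (∀ A : Set α, Aᶜ.Finite → A ∈ F) ∧ ∅ ∉ F

/-- `S → F` : `S` is an infinite set converging to the filter `F`, i.e. `S ⊆* A` for all `A ∈ F`. -/
def ConvTo {α : Type*} (S : Set α) (F : Set (Set α)) : Prop :=
  S.Infinite ∧ ∀ A ∈ F, (S \ A).Finite

/-- `F` is relatively equivalent to the Fréchet filter: some `A ∈ F` converges to `F`. -/
def RelFrechet {α : Type*} (F : Set (Set α)) : Prop := ∃ A ∈ F, ConvTo A F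

/-- Rudin–Keisler order: `F ≤_RK G` iff `f[G] = F` for some surjection `f`. -/
def RKle {α : Type*} (F G : Set (Set α)) : Prop :=
  ∃ f : α → α, Function.Surjective f ∧ mapFilter f G = F

/-- `F ≈ G` : there is a bijection `f` with `f[F] = G`. -/
def EquivFilter {α : Type*} (F G : Set (Set α)) : Prop :=
  ∃ f : α → α, Function.Bijective f ∧ mapFilter f F = G

/-- `F <_RK G` : `F ≤_RK G` and `¬ (F ≈ G)`. -/
def RKlt {α : Type*} (F G : Set (Set α)) : Prop := RKle F G ∧ ¬ EquivFilter F G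

/-- An AD-family: an infinite family of infinite sets with pairwise finite intersections. -/
def IsADFamily {α : Type*} (𝒜 : Set (Set α)) : Prop :=
  𝒜.Infinite ∧ (∀ A ∈ 𝒜, A.Infinite) ∧ ∀ A ∈ 𝒜, ∀ B ∈ 𝒜, A ≠ B → (A ∩ B).Finite

/-- The ideal generated by a family `𝒜`: sets almost covered by finitely many members of `𝒜`. -/
def idealGen {α : Type*} (𝒜 : Set (Set α)) : Set (Set α) :=
  {X | ∃ 𝒜' : Finset (Set α), ↑𝒜' ⊆ 𝒜 ∧ (X \ ⋃₀ ↑𝒜').Finite}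

/-- `S_𝒜`: the filter dual to the ideal generated by `𝒜`. -/
def SFam {α : Type*} (𝒜 : Set (Set α)) : Set (Set α) := {F | Fᶜ ∈ idealGen 𝒜}

/-- `F_𝒟 = {F : D ⊆* F for every D ∈ 𝒟}`. -/
def FFam {α : Type*} (𝒟 : Set (Set α)) : Set (Set α) := {F | ∀ D ∈ 𝒟, (D \ F).Finite}

/-- A nowhere MAD family: every set outside the generated ideal contains an infinite set
almost disjoint from every member of `𝒜`. -/
def IsNMAD {α : Type*} (𝒜 : Set (Set α)) : Prop :=
  IsADFamily 𝒜 ∧ ∀ X : Set α, X ∉ idealGen 𝒜 →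
    ∃ B ⊆ X, B.Infinite ∧ ∀ A ∈ 𝒜, (B ∩ A).Finite

/-- A partition of `ℕ` into infinitely many infinite sets. -/
def IsInfPartition (𝒬 : Set (Set ℕ)) : Prop :=
  𝒬.Infinite ∧ (∀ P ∈ 𝒬, P.Infinite) ∧ ⋃₀ 𝒬 = Set.univ ∧
    ∀ P ∈ 𝒬, ∀ Q ∈ 𝒬, P ≠ Q → P ∩ Q = ∅

/-- `F` is a Fréchet–Urysohn filter: every `F`-positive set contains a sequence converging to `F`. -/
def IsFUFilter {α : Type*} (F : Set (Set α)) : Prop :=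
  ∀ A : Set α, Aᶜ ∉ F → ∃ S ⊆ A, ConvTo S F

/-- The trace filter `F|_A = {G ∩ A : G ∈ F}`. -/
def traceFam {α : Type*} (F : Set (Set α)) (A : Set α) : Set (Set α) := {S | ∃ G ∈ F, S = G ∩ A}

/-- Todorčević–Uzcátegui order: there are `A ∈ G⁺`, `B ∈ F` and a bijection `f : A → B`
with `f[G|_A] = F|_B`. -/
def TUle {α : Type*} (F G : Set (Set α)) : Prop :=
  ∃ A : Set α, Aᶜ ∉ G ∧ ∃ B ∈ F, ∃ f : α → α, Set.BijOn f A B ∧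
    {Y : Set α | Y ⊆ B ∧ A ∩ f ⁻¹' Y ∈ traceFam G A} = traceFam F B

/-!
Add to `𝒜` the singletons of the points outside `⋃₀ 𝒜`. The enlarged family covers every point, so
it generates the same ideal, but now exactly rather than modulo finite sets. It is irredundant: no
member is covered by finitely many others. A filter dual to an ideal generated by an infinite
irredundant family `E i`, `i ∈ ι`, has character `|ι|`. Indeed the complements of finite unions form
a base of size at most `|ι|`. Conversely, cover the complement of each `B` in a base `ℬ` by finitely
many `E i`; the complement of `E i` contains some such `B`, so irredundancy puts `i` into the finite
set chosen for `B`, and `ι` is a union of at most `|ℬ|` finite sets. For an AD-family this gives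
`|𝒜| + |(⋃₀ 𝒜)ᶜ|`, and over `ℕ` the second summand is absorbed.
-/

open scoped Cardinal

universe u

section FilterCharacter

variable {α ι : Type u} {F ℬ : Set (Set α)} {c : Cardinal.{u}} {E : ι → Set α}

/-- `ℬ` is a base of the filter `F`: a subfamily of `F` such that every member of `F` contains a
member of `ℬ`. -/
def IsFilterBaseOf (ℬ F : Set (Set α)) : Prop :=
  ℬ ⊆ F ∧ ∀ A ∈ F, ∃ B ∈ ℬ, B ⊆ A

/-- The character `χ(F)` of a filter `F`: the least cardinality of a base of `F`. -/
noncomputable def filterCharacter (F : Set (Set α)) : Cardinal.{u} :=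
  sInf {c | ∃ ℬ, IsFilterBaseOf ℬ F ∧ c = #ℬ}

theorem IsFilterBaseOf.filterCharacter_le (hℬ : IsFilterBaseOf ℬ F) : filterCharacter F ≤ #ℬ :=
  csInf_le' ⟨ℬ, hℬ, rfl⟩

theorem le_filterCharacter (h : ∀ ℬ, IsFilterBaseOf ℬ F → c ≤ #ℬ) : c ≤ filterCharacter F := by
  refine le_csInf ⟨#F, F, ⟨Subset.rfl, fun A hA => ⟨A, hA, Subset.rfl⟩⟩, rfl⟩ ?_
  rintro _ ⟨ℬ, hℬ, rfl⟩
  exact h ℬ hℬ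

/-- The filter dual to the ideal generated by the sets `E i`. Unlike in `idealGen`, the members of
the ideal are covered by finitely many `E i` exactly, not up to a finite set. -/
def coverFilter (E : ι → Set α) : Set (Set α) :=
  {F | ∃ s : Finset ι, Fᶜ ⊆ ⋃ i ∈ s, E i}

/-- No member of the family `E` is covered by finitely many of the other members. -/
def FinitelyIrredundant (E : ι → Set α) : Prop :=
  ∀ i, ∀ s : Finset ι, E i ⊆ ⋃ j ∈ s, E j → i ∈ s

theorem isFilterBaseOf_coverFilter (E : ι → Set α) :
    IsFilterBaseOf (range fun s : Finset ι => (⋃ i ∈ s, E i)ᶜ) (coverFilter E) := by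
  refine ⟨?_, fun F ⟨s, hs⟩ => ⟨_, mem_range_self s, compl_subset_comm.1 hs⟩⟩
  rintro _ ⟨s, rfl⟩
  exact ⟨s, (compl_compl _).subset⟩

theorem filterCharacter_coverFilter_le [Infinite ι] (E : ι → Set α) :
    filterCharacter (coverFilter E) ≤ #ι :=
  calc
    filterCharacter (coverFilter E)
    _ ≤ #(range fun s : Finset ι => (⋃ i ∈ s, E i)ᶜ) :=
      (isFilterBaseOf_coverFilter E).filterCharacter_le
    _ ≤ #(Finset ι) := Cardinal.mk_range_le
    _ = #ι := Cardinal.mk_finset_of_infinite ι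

theorem FinitelyIrredundant.mk_le_of_isFilterBaseOf [Infinite ι] (hE : FinitelyIrredundant E)
    (hℬ : IsFilterBaseOf ℬ (coverFilter E)) : #ι ≤ #ℬ := by
  choose cover compl_subset_cover using fun B : ℬ => hℬ.1 B.2
  have iUnion_cover : ⋃ B, (cover B : Set ι) = univ := by
    refine eq_univ_of_forall fun i => ?_
    have compl_mem : (E i)ᶜ ∈ coverFilter E := ⟨{i}, by simp⟩
    obtain ⟨B, hB, hBi⟩ := hℬ.2 _ compl_mem
    have subset_cover := (subset_compl_comm.1 hBi).trans (compl_subset_cover ⟨B, hB⟩)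
    exact mem_iUnion_of_mem ⟨B, hB⟩ (hE i _ subset_cover)
  exact (Cardinal.le_range_of_union_finset_eq_univ cover iUnion_cover).trans Cardinal.mk_range_le

theorem FinitelyIrredundant.filterCharacter_coverFilter [Infinite ι] (hE : FinitelyIrredundant E) :
    filterCharacter (coverFilter E) = #ι :=
  (filterCharacter_coverFilter_le E).antisymm
    (le_filterCharacter fun _ => hE.mk_le_of_isFilterBaseOf)

end FilterCharacter

section AlmostDisjoint

variable {α : Type u} {𝒜 : Set (Set α)}

/-- The members of `𝒜` together with the singletons of the points that no member of `𝒜` contains.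
Other singletons are left out, to keep the family irredundant when `𝒜` is an AD-family. -/
def withSingletons (𝒜 : Set (Set α)) : 𝒜 ⊕ ((⋃₀ 𝒜)ᶜ : Set α) → Set α :=
  Sum.elim (fun A => A) (fun x => {(x : α)})

theorem iUnion_withSingletons (𝒜 : Set (Set α)) : ⋃ i, withSingletons 𝒜 i = univ := by
  refine eq_univ_of_forall fun x => mem_iUnion.2 ?_
  by_cases hx : x ∈ ⋃₀ 𝒜
  · obtain ⟨A, hA, hxA⟩ := hx
    exact ⟨.inl ⟨A, hA⟩, hxA⟩
  · exact ⟨.inr ⟨x, hx⟩, rfl⟩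

theorem mem_idealGen_iff_subset_biUnion_withSingletons {X : Set α} :
    X ∈ idealGen 𝒜 ↔
      ∃ s : Finset (𝒜 ⊕ ((⋃₀ 𝒜)ᶜ : Set α)), X ⊆ ⋃ i ∈ s, withSingletons 𝒜 i := by
  classical
  constructor
  · rintro ⟨𝒜', h𝒜', hX⟩
    obtain ⟨I, hI, hXI⟩ :=
      finite_subset_iUnion hX ((subset_univ _).trans (iUnion_withSingletons 𝒜).superset)
    refine ⟨(𝒜'.subtype (· ∈ 𝒜)).map .inl ∪ hI.toFinset, fun x hx => ?_⟩
    by_cases hx' : x ∈ ⋃₀ (𝒜' : Set (Set α))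
    · obtain ⟨A, hA, hxA⟩ := hx'
      exact mem_iUnion₂.2 ⟨.inl ⟨A, h𝒜' hA⟩, by simpa using .inl hA, hxA⟩
    · obtain ⟨i, hi, hxi⟩ := mem_iUnion₂.1 (hXI ⟨hx, hx'⟩)
      exact mem_iUnion₂.2 ⟨i, by simp [hi], hxi⟩
  · rintro ⟨s, hs⟩
    refine ⟨s.toLeft.map (.subtype _), by simp, ?_⟩
    refine (s.toRight.finite_toSet.image Subtype.val).subset fun x ⟨hx, hx'⟩ => ?_
    obtain ⟨A | y, hi, hxi⟩ := mem_iUnion₂.1 (hs hx)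
    · exact absurd ⟨A, by simpa using hi, hxi⟩ hx'
    · exact ⟨y, by simpa using hi, (mem_singleton_iff.1 hxi).symm⟩

theorem SFam_eq_coverFilter_withSingletons (𝒜 : Set (Set α)) :
    SFam 𝒜 = coverFilter (withSingletons 𝒜) :=
  Set.ext fun _ => mem_idealGen_iff_subset_biUnion_withSingletons

theorem IsADFamily.finite_inter_withSingletons (h𝒜 : IsADFamily 𝒜) {A : 𝒜}
    {i : 𝒜 ⊕ ((⋃₀ 𝒜)ᶜ : Set α)} (hi : i ≠ .inl A) : ((A : Set α) ∩ withSingletons 𝒜 i).Finite := by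
  obtain B | x := i
  · exact h𝒜.2.2 A A.2 B B.2 fun hAB => hi (congrArg Sum.inl (Subtype.ext hAB.symm))
  · exact (finite_singleton (x : α)).inter_of_right A

theorem IsADFamily.finitelyIrredundant_withSingletons (h𝒜 : IsADFamily 𝒜) :
    FinitelyIrredundant (withSingletons 𝒜) := by
  rintro (A | x) s hs
  · by_contra hA
    have finite_biUnion : (⋃ i ∈ s, (A : Set α) ∩ withSingletons 𝒜 i).Finite :=
      s.finite_toSet.biUnion fun i hi =>
        h𝒜.finite_inter_withSingletons (ne_of_mem_of_not_mem hi hA)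
    have subset_biUnion : (A : Set α) ⊆ ⋃ i ∈ s, (A : Set α) ∩ withSingletons 𝒜 i := by
      rw [← inter_iUnion₂]
      exact subset_inter Subset.rfl hs
    exact h𝒜.2.1 A A.2 (finite_biUnion.subset subset_biUnion)
  · obtain ⟨A | y, hi, hxi⟩ := mem_iUnion₂.1 (hs rfl)
    · exact absurd ⟨A, A.2, hxi⟩ x.2
    · rwa [Subtype.ext (mem_singleton_iff.1 hxi)]

theorem statement1_general (h𝒜 : IsADFamily 𝒜) :
    filterCharacter (SFam 𝒜) = #𝒜 + #((⋃₀ 𝒜)ᶜ : Set α) := by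
  have : Infinite 𝒜 := h𝒜.1.to_subtype
  rw [SFam_eq_coverFilter_withSingletons,
    h𝒜.finitelyIrredundant_withSingletons.filterCharacter_coverFilter, Cardinal.mk_sum,
    Cardinal.lift_id, Cardinal.lift_id]

end AlmostDisjoint

/-- For every AD-family `𝒜`, the character of `S_𝒜` equals the cardinality of `𝒜`. -/
theorem statement1 (𝒜 : Set (Set ℕ)) (h𝒜 : IsADFamily 𝒜) :
    sInf {c : Cardinal | ∃ ℬ : Set (Set ℕ), ℬ ⊆ SFam 𝒜 ∧
      (∀ F ∈ SFam 𝒜, ∃ B ∈ ℬ, B ⊆ F) ∧ c = Cardinal.mk ↥ℬ} = Cardinal.mk ↥𝒜 := by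
  have aleph0_le : ℵ₀ ≤ #𝒜 := Cardinal.infinite_iff.1 h𝒜.1.to_subtype
  simpa only [filterCharacter, IsFilterBaseOf, and_assoc,
    Cardinal.add_eq_left aleph0_le (Cardinal.mk_le_aleph0.trans aleph0_le)]
    using statement1_general h𝒜
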